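/- arXiv:2408.10651 — 4 statements merged into one kernel-verified Lean document; each statement's English description precedes it below -/
import Mathlib

section
/- For all natural numbers r ≥ 2 and m with r dividing m, there exists an edge-coloured graph G on (r²−2)m vertices with minimum colour degree (r²−r−1)m − 1 that contains no perfect rainbow-K_r-tiling, i.e., no partition of its vertex set into vertex-disjoint rainbow copies of the complete graph K_r. -/
/-- Colouring: edges between `A` (values below `a`) and `B` (values at least `b`) get
the colour of the `B`-endpoint; all other pairs get their own colour. -/
def colr (N a b : ℕ) (u v : ℕ) : ℕ :=
  if min u v < a ∧ b ≤ max u v then max u v else N + Nat.pair (min u v) (max u v)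

def badPair (k a b : ℕ) (u v : ℕ) : Prop :=
  (u < a ∧ v < a ∧ u % k = v % k) ∨ (u < a ∧ a ≤ v ∧ v < b) ∨ (v < a ∧ a ≤ u ∧ u < b)

def gr (N k a b : ℕ) : SimpleGraph (Fin N) where
  Adj u v := u ≠ v ∧ ¬ badPair k a b u v
  symm := ⟨by
    intro u v h
    refine ⟨h.1.symm, fun hb => h.2 ?_⟩
    unfold badPair at *
    omega⟩
  loopless := ⟨fun u h => h.1 rfl⟩

lemma colr_comm (N a b u v : ℕ) : colr N a b u v = colr N a b v u := by
  unfold colr; rw [min_comm, max_comm]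

lemma minmax_inj {v w w' : ℕ} (h1 : min v w = min v w') (h2 : max v w = max v w') : w = w' := by
  omega

/-- injectivity of the colouring at `v` whenever `A`-`B` edges at `v` are only used with `v ∈ A` -/
lemma colr_inj {N a b v w w' : ℕ} (hab : a ≤ b) (hv : v < N) (hw : w < N) (hw' : w' < N)
    (hA : v < a ∨ (a ≤ w ∧ a ≤ w'))
    (h : colr N a b v w = colr N a b v w') : w = w' := by
  unfold colr at h
  split_ifs at h with h1 h2 h2
  · omega
  · omega
  · omega
  · have h3 := Nat.pair_eq_pair.mp (Nat.add_left_cancel h)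
    exact minmax_inj h3.1 h3.2

lemma deg_lower {N k m a b : ℕ} (hk : 1 ≤ k) (ha : a = k * m) (hab : a < b) (hbN : b ≤ N)
    (hbm : b + m = 2 * a + 1) (v : Fin N) :
    N - a - 1 ≤ Set.ncard ((fun w : Fin N => colr N a b v w) '' {w | (gr N k a b).Adj v w}) := by
  classical
  -- bad set for injective part
  obtain ⟨W, hWadj, hWinj, hWcard⟩ : ∃ W : Finset (Fin N), (∀ w ∈ W, (gr N k a b).Adj v w) ∧
      (∀ w ∈ W, (v : ℕ) < a ∨ a ≤ (w : ℕ)) ∧ N - a - 1 ≤ W.card := by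
    by_cases hv : (v : ℕ) < a
    · let bad : Finset ℕ := (Finset.range m).image (fun j => (v : ℕ) % k + k * j) ∪ Finset.Ico a b
      have hbad : bad.card ≤ a + 1 := by
        refine (Finset.card_union_le _ _).trans ?_
        have h1 := Finset.card_image_le (s := Finset.range m) (f := fun j => (v : ℕ) % k + k * j)
        rw [Finset.card_range] at h1
        rw [Nat.card_Ico]
        omega
      let Z : Finset (Fin N) := Finset.univ.filter (fun w => (w : ℕ) ∈ bad)
      have hZ : Z.card ≤ bad.card :=
        Finset.card_le_card_of_injOn (fun w => (w : ℕ)) (fun w hw => by simpa [Z] using hw)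
          (fun x _ y _ h => Fin.ext h)
      refine ⟨Zᶜ, ?_, fun _ _ => Or.inl hv, ?_⟩
      · intro w hw
        have hw2 : (w : ℕ) ∉ bad := by simpa [Z] using hw
        have key : (w : ℕ) < a → (v : ℕ) % k = (w : ℕ) % k → False := by
          intro hwa he
          apply hw2
          refine Finset.mem_union_left _ (Finset.mem_image.mpr ⟨(w : ℕ) / k, ?_, ?_⟩)
          · rw [Finset.mem_range]
            exact Nat.div_lt_of_lt_mul (ha ▸ hwa)
          · simp only [he]
            exact Nat.mod_add_div _ _
        have hC : ¬ (a ≤ (w : ℕ) ∧ (w : ℕ) < b) := fun h =>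
          hw2 (Finset.mem_union_right _ (Finset.mem_Ico.mpr h))
        refine ⟨?_, ?_⟩
        · rintro rfl
          exact key hv rfl
        · rintro (⟨_, h2, h3⟩ | ⟨_, h2⟩ | ⟨_, h2, _⟩)
          · exact key h2 h3
          · exact hC h2
          · omega
      · rw [Finset.card_compl, Fintype.card_fin]; omega
    · let bad : Finset ℕ := Finset.range a ∪ {(v : ℕ)}
      have hbad : bad.card ≤ a + 1 := by
        refine (Finset.card_union_le _ _).trans ?_
        simp
      let Z : Finset (Fin N) := Finset.univ.filter (fun w => (w : ℕ) ∈ bad)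
      have hZ : Z.card ≤ bad.card :=
        Finset.card_le_card_of_injOn (fun w => (w : ℕ)) (fun w hw => by simpa [Z] using hw)
          (fun x _ y _ h => Fin.ext h)
      have hmem : ∀ w ∈ Zᶜ, a ≤ (w : ℕ) ∧ v ≠ w := by
        intro w hw
        have hw2 : (w : ℕ) ∉ bad := by simpa [Z] using hw
        simp only [bad, Finset.mem_union, Finset.mem_range, Finset.mem_singleton, not_or] at hw2
        refine ⟨by omega, ?_⟩
        rintro rfl
        exact hw2.2 rfl
      refine ⟨Zᶜ, ?_, fun w hw => Or.inr (hmem w hw).1, ?_⟩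
      · intro w hw
        refine ⟨(hmem w hw).2, ?_⟩
        have := (hmem w hw).1
        unfold badPair
        omega
      · rw [Finset.card_compl, Fintype.card_fin]; omega
  have hinj : Set.InjOn (fun w : Fin N => colr N a b v w) (W : Set (Fin N)) := by
    intro x hx y hy h
    refine Fin.ext (colr_inj hab.le v.2 x.2 y.2 ?_ h)
    have := hWinj x hx
    have := hWinj y hy
    omega
  calc N - a - 1 ≤ W.card := hWcard
    _ = Set.ncard ((fun w : Fin N => colr N a b v w) '' (W : Set (Fin N))) := by
        rw [Set.InjOn.ncard_image hinj, Set.ncard_coe_finset]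
    _ ≤ Set.ncard ((fun w : Fin N => colr N a b v w) '' {w | (gr N k a b).Adj v w}) :=
        Set.ncard_le_ncard (Set.image_mono (show (W : Set (Fin N)) ⊆ {w | (gr N k a b).Adj v w}
          from fun w hw => hWadj w hw)) (Set.toFinite _)

lemma deg_upper {N k a b : ℕ} (hab : a < b) (v : Fin N) (hv : (v : ℕ) = a) :
    Set.ncard ((fun w : Fin N => colr N a b v w) '' {w | (gr N k a b).Adj v w}) ≤ N - a - 1 := by
  classical
  refine (Set.ncard_image_le (Set.toFinite _)).trans ?_
  have hsub : ((fun w : Fin N => (w : ℕ)) '' {w | (gr N k a b).Adj v w}) ⊆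
      (Finset.Ico (a + 1) N : Finset ℕ) := by
    rintro _ ⟨w, ⟨h1, h2⟩, rfl⟩
    have h3 : (v : ℕ) ≠ w := fun h => h1 (Fin.ext h)
    have := w.2
    unfold badPair at h2
    simp only [Finset.coe_Ico, Set.mem_Ico]
    omega
  rw [← Set.ncard_image_of_injective _ (Fin.val_injective (n := N))]
  refine (Set.ncard_le_ncard hsub (Set.toFinite _)).trans ?_
  rw [Set.ncard_coe_finset, Nat.card_Ico]
  omega

lemma no_tiling {N k a b : ℕ} (hk : 1 ≤ k) (hab : a < b) (hN : N + 1 = b + k * a) (hbN : b ≤ N) :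
    ¬ ∃ T : Finset (Finset (Fin N)),
        (∀ S ∈ T, S.card = k + 1 ∧
          (∀ x ∈ S, ∀ y ∈ S, x ≠ y → (gr N k a b).Adj x y) ∧
          (∀ x ∈ S, ∀ y ∈ S, ∀ x' ∈ S, ∀ y' ∈ S, x ≠ y → x' ≠ y' →
            ({x, y} : Finset _) ≠ {x', y'} → colr N a b x y ≠ colr N a b x' y')) ∧
        (∀ S ∈ T, ∀ S' ∈ T, S ≠ S' → Disjoint S S') ∧
        (∀ v, ∃ S ∈ T, v ∈ S) := by
  classical
  rintro ⟨T, hT, hdis, hcov⟩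
  have hsum : ∀ (p : Fin N → Prop) [DecidablePred p],
      (Finset.univ.filter p).card = ∑ S ∈ T, (S.filter p).card := by
    intro p _
    rw [← Finset.card_biUnion]
    · congr 1
      ext v
      obtain ⟨S, hS, hv⟩ := hcov v
      simp only [Finset.mem_filter, Finset.mem_univ, true_and, Finset.mem_biUnion]
      exact ⟨fun h => ⟨S, hS, hv, h⟩, fun ⟨_, _, _, h⟩ => h⟩
    · intro S hS S' hS' hne
      exact Finset.disjoint_filter_filter (hdis S hS S' hS' hne)
  have hloc : ∀ S ∈ T, k * (S.filter (fun v : Fin N => (v : ℕ) < a)).card ≤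
      (S.filter (fun v : Fin N => b ≤ (v : ℕ))).card := by
    intro S hS
    obtain ⟨hc, hadj, hrb⟩ := hT S hS
    by_cases hA : ∃ x ∈ S, (x : ℕ) < a
    · obtain ⟨x, hx, hxa⟩ := hA
      -- no C vertices
      have hnoC : ∀ y ∈ S, (y : ℕ) < a ∨ b ≤ (y : ℕ) := by
        intro y hy
        by_contra hcon
        have hne : x ≠ y := by rintro rfl; omega
        have := (hadj x hx y hy hne).2
        unfold badPair at this
        omega
      by_cases hB : ∃ z ∈ S, b ≤ (z : ℕ)
      · obtain ⟨z, hz, hzb⟩ := hB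
        have h1 : (S.filter (fun v : Fin N => (v : ℕ) < a)).card ≤ 1 := by
          rw [Finset.card_le_one]
          intro y hy y' hy'
          rw [Finset.mem_filter] at hy hy'
          by_contra hne
          have e1 : y ≠ z := by rintro rfl; omega
          have e2 : y' ≠ z := by rintro rfl; omega
          refine hrb y hy.1 z hz y' hy'.1 z hz e1 e2 ?_ ?_
          · intro h
            have : y ∈ ({y', z} : Finset (Fin N)) := h ▸ Finset.mem_insert_self _ _
            simp only [Finset.mem_insert, Finset.mem_singleton] at this
            tauto
          · unfold colr
            rw [if_pos (by omega), if_pos (by omega)]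
            omega
        have h2 : S.card ≤ (S.filter (fun v : Fin N => (v : ℕ) < a)).card +
            (S.filter (fun v : Fin N => b ≤ (v : ℕ))).card := by
          refine le_trans (Finset.card_le_card ?_) (Finset.card_union_le _ _)
          intro y hy
          rw [Finset.mem_union, Finset.mem_filter, Finset.mem_filter]
          have := hnoC y hy
          tauto
        have h3 := Nat.mul_le_mul_left k h1
        omega
      · exfalso
        have hall : ∀ y ∈ S, (y : ℕ) < a := fun y hy =>
          (hnoC y hy).resolve_right fun h => hB ⟨y, hy, h⟩
        have : S.card ≤ (Finset.range k).card := by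
          refine Finset.card_le_card_of_injOn (fun y => (y : ℕ) % k) ?_ ?_
          · intro y _
            simpa using Nat.mod_lt _ (by omega)
          · intro y hy y' hy' h
            by_contra hne
            exact (hadj y hy y' hy' hne).2 (Or.inl ⟨hall y hy, hall y' hy', h⟩)
        rw [Finset.card_range] at this
        omega
    · have : S.filter (fun v : Fin N => (v : ℕ) < a) = ∅ :=
        Finset.filter_eq_empty_iff.mpr fun y hy h => hA ⟨y, hy, h⟩
      rw [this]; simp
  have hle := Finset.sum_le_sum hloc
  rw [← Finset.mul_sum, ← hsum, ← hsum] at hle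
  have hAc : a ≤ (Finset.univ.filter (fun v : Fin N => (v : ℕ) < a)).card := by
    have : (Finset.range a).card ≤ _ := Finset.card_le_card_of_surjOn
      (s := Finset.univ.filter (fun v : Fin N => (v : ℕ) < a)) (t := Finset.range a)
      (fun v => (v : ℕ)) (by
        intro i hi
        have hi' : i < a := by simpa using hi
        exact ⟨⟨i, by omega⟩, by simpa using hi', rfl⟩)
    simpa using this
  have hBc : (Finset.univ.filter (fun v : Fin N => b ≤ (v : ℕ))).card ≤ N - b := by
    have := Finset.card_le_card_of_injOn
      (s := Finset.univ.filter (fun v : Fin N => b ≤ (v : ℕ))) (t := Finset.Ico b N)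
      (fun v => (v : ℕ)) (by
        intro v hv
        have hv' : b ≤ (v : ℕ) := by simpa using hv
        simpa using hv') (fun x _ y _ h => Fin.ext h)
    simpa using this
  have := Nat.mul_le_mul_left k hAc
  omega

/-- For `r ≥ 2` and `r ∣ m` there is an edge-coloured graph on `(r²-2)m` vertices with
minimum colour degree `(r²-r-1)m - 1` and no perfect rainbow-`K_r`-tiling. -/
theorem stmt_3 (r m : ℕ) (hr : 2 ≤ r) (hm0 : 1 ≤ m) (hm : r ∣ m) :
    ∃ (G : SimpleGraph (Fin ((r ^ 2 - 2) * m)))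
      (c : Fin ((r ^ 2 - 2) * m) → Fin ((r ^ 2 - 2) * m) → ℕ),
      (∀ u v, c u v = c v u) ∧
      (∀ v, (r ^ 2 - r - 1) * m - 1 ≤ Set.ncard ((c v) '' {w | G.Adj v w})) ∧
      (∃ v, Set.ncard ((c v) '' {w | G.Adj v w}) = (r ^ 2 - r - 1) * m - 1) ∧
      ¬ ∃ T : Finset (Finset (Fin ((r ^ 2 - 2) * m))),
        (∀ S ∈ T, S.card = r ∧
          (∀ x ∈ S, ∀ y ∈ S, x ≠ y → G.Adj x y) ∧
          (∀ x ∈ S, ∀ y ∈ S, ∀ x' ∈ S, ∀ y' ∈ S, x ≠ y → x' ≠ y' →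
            ({x, y} : Finset _) ≠ {x', y'} → c x y ≠ c x' y')) ∧
        (∀ S ∈ T, ∀ S' ∈ T, S ≠ S' → Disjoint S S') ∧
        (∀ v, ∃ S ∈ T, v ∈ S) := by
  obtain ⟨j, rfl⟩ : ∃ j, r = j + 2 := ⟨r - 2, by omega⟩
  have e1 : (j + 2) ^ 2 - 2 = j * j + 4 * j + 2 := by
    have : (j + 2) ^ 2 = j * j + 4 * j + 4 := by ring
    omega
  have e2 : (j + 2) ^ 2 - (j + 2) - 1 = j * j + 3 * j + 1 := by
    have : (j + 2) ^ 2 = j * j + 4 * j + 4 := by ring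
    omega
  rw [e2]
  generalize hNdef : ((j + 2) ^ 2 - 2) * m = N
  rw [e1] at hNdef
  obtain ⟨a, ha⟩ : ∃ a, a = (j + 1) * m := ⟨_, rfl⟩
  obtain ⟨b, hb⟩ : ∃ b, b = (2 * j + 1) * m + 1 := ⟨_, rfl⟩
  have hjm : (2 * j + 1) * m = (j + 1) * m + j * m := by ring
  have hab : a < b := by omega
  have hbm : b + m = 2 * a + 1 := by rw [hb, ha]; ring
  have hN : N + 1 = b + (j + 1) * a := by rw [← hNdef, hb, ha]; ring
  have hapos : 1 ≤ (j + 1) * a := by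
    rw [ha]; exact Nat.mul_pos (by omega) (Nat.mul_pos (by omega) hm0)
  have hbN : b ≤ N := by omega
  have hD : (j * j + 3 * j + 1) * m - 1 = N - a - 1 := by
    have : (j * j + 3 * j + 1) * m + a = N := by rw [← hNdef, ha]; ring
    omega
  rw [hD]
  refine ⟨gr N (j + 1) a b, fun u v => colr N a b u v, fun u v => colr_comm _ _ _ _ _,
    fun v => deg_lower (by omega) ha hab hbN hbm v, ⟨⟨a, by omega⟩, ?_⟩, ?_⟩
  · exact le_antisymm (deg_upper hab _ rfl) (deg_lower (by omega) ha hab hbN hbm _)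
  · exact no_tiling (by omega) hab hN hbN
end

section
/- Let G be a digraph on n vertices (n sufficiently large) in which every vertex has out-degree at least (2 + √(13/2) + γ)n/5 for some γ > 0. Then G contains a perfect fractional (4,2)-tiling. -/
/-- `S` spans a member of `K_{r,s}(G)`: `r` vertices, complete base graph and minimum
out-degree at least `s` inside `S`. -/
def IsKrs {n : ℕ} (G : Fin n → Fin n → Prop) (r s : ℕ) (S : Finset (Fin n)) : Prop :=
  S.card = r ∧ (∀ x ∈ S, ∀ y ∈ S, x ≠ y → G x y ∨ G y x) ∧
    (∀ x ∈ S, s ≤ Set.ncard {y | y ∈ S ∧ G x y})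


open Classical in
/-- Indicator of a missing arc. -/
noncomputable def miss {n : ℕ} (G : Fin n → Fin n → Prop) (u w : Fin n) : ℝ :=
  if G u w then 0 else 1

open Classical in
/-- Indicator of a pair that is not bidirected. -/
noncomputable def nbi {n : ℕ} (G : Fin n → Fin n → Prop) (u w : Fin n) : ℝ :=
  if G u w ∧ G w u then 0 else 1

lemma miss_nonneg {n : ℕ} (G : Fin n → Fin n → Prop) (u w : Fin n) : 0 ≤ miss G u w := by
  unfold miss; split_ifs <;> norm_num

lemma nbi_le_one {n : ℕ} (G : Fin n → Fin n → Prop) (u w : Fin n) : nbi G u w ≤ 1 := by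
  unfold nbi; split_ifs <;> norm_num

lemma nbi_le {n : ℕ} (G : Fin n → Fin n → Prop) (u w : Fin n) :
    nbi G u w ≤ miss G u w + miss G w u := by
  unfold nbi miss
  by_cases h1 : G u w <;> by_cases h2 : G w u <;> simp [h1, h2]

lemma row_le {n : ℕ} (G : Fin n → Fin n → Prop) (E : ℝ)
    (hE : ∀ v, ∑ w, miss G v w ≤ E) (Y : Finset (Fin n)) (u : Fin n) :
    ∑ w ∈ Y, miss G u w ≤ E :=
  le_trans (Finset.sum_le_sum_of_subset_of_nonneg (Finset.subset_univ Y)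
    (fun w _ _ => miss_nonneg G u w)) (hE u)

lemma block_le {n : ℕ} (G : Fin n → Fin n → Prop) (E : ℝ)
    (hE : ∀ v, ∑ w, miss G v w ≤ E) (X Y : Finset (Fin n)) :
    ∑ u ∈ X, ∑ w ∈ Y, miss G u w ≤ E * X.card := by
  calc ∑ u ∈ X, ∑ w ∈ Y, miss G u w ≤ ∑ u ∈ X, E :=
        Finset.sum_le_sum (fun u _ => row_le G E hE Y u)
    _ = E * X.card := by simp [mul_comm]

lemma square_le {n : ℕ} (G : Fin n → Fin n → Prop) (E : ℝ)
    (hE : ∀ v, ∑ w, miss G v w ≤ E) (X : Finset (Fin n)) :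
    ∑ u ∈ X, ∑ w ∈ X, nbi G u w ≤ 2 * (E * X.card) := by
  have h1 : ∑ u ∈ X, ∑ w ∈ X, nbi G u w
      ≤ ∑ u ∈ X, ∑ w ∈ X, (miss G u w + miss G w u) :=
    Finset.sum_le_sum (fun u _ => Finset.sum_le_sum (fun w _ => nbi_le G u w))
  have h2 : ∑ u ∈ X, ∑ w ∈ X, (miss G u w + miss G w u)
      = ∑ u ∈ X, ∑ w ∈ X, miss G u w + ∑ u ∈ X, ∑ w ∈ X, miss G u w := by
    simp only [Finset.sum_add_distrib]
    congr 1
    exact Finset.sum_comm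
  have h3 := block_le G E hE X X
  linarith

lemma indep_le {n : ℕ} (G : Fin n → Fin n → Prop) (E : ℝ) (hE0 : 0 ≤ E)
    (hE : ∀ v, ∑ w, miss G v w ≤ E) (I : Finset (Fin n))
    (hI : ∀ u ∈ I, ∀ w ∈ I, ¬ (G u w ∧ G w u)) : (I.card : ℝ) ≤ 2 * E := by
  have h1 := square_le G E hE I
  have h2 : ∑ u ∈ I, ∑ w ∈ I, nbi G u w = (I.card : ℝ) * I.card := by
    rw [Finset.sum_congr rfl (fun u hu => Finset.sum_congr rfl
      (fun w hw => (by unfold nbi; rw [if_neg (hI u hu w hw)] : nbi G u w = 1)))]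
    simp
  rw [h2] at h1
  by_contra hc
  push Not at hc
  nlinarith

open Classical in
lemma nbrow_ge {n : ℕ} (G : Fin n → Fin n → Prop) (E : ℝ) (hE0 : 0 ≤ E)
    (hE : ∀ v, ∑ w, miss G v w ≤ E) (Y : Finset (Fin n)) (x : Fin n)
    (hx : ∀ y ∈ Y, ∀ z ∈ Y, G x y → G y x → G x z → G z x → ¬ (G y z ∧ G z y)) :
    (Y.card : ℝ) - 2 * E ≤ ∑ y ∈ Y, nbi G x y := by
  have h1 := indep_le G E hE0 hE (Y.filter (fun y => G x y ∧ G y x)) (by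
    intro u hu w hw
    simp only [Finset.mem_filter] at hu hw
    exact hx u hu.1 w hw.1 hu.2.1 hu.2.2 hw.2.1 hw.2.2)
  have h2 : ∑ y ∈ Y, nbi G x y = ((Y.filter (fun y => ¬ (G x y ∧ G y x))).card : ℝ) := by
    rw [Finset.card_filter]
    push_cast
    refine Finset.sum_congr rfl (fun y _ => ?_)
    unfold nbi
    by_cases h : G x y ∧ G y x <;> simp [h]
  have h3 := Finset.card_filter_add_card_filter_not (s := Y) (fun y => G x y ∧ G y x)
  have h4 : ((Y.filter (fun y => G x y ∧ G y x)).card : ℝ)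
    + ((Y.filter (fun y => ¬ (G x y ∧ G y x))).card : ℝ) = Y.card := by exact_mod_cast h3
  linarith

lemma tri_free_le {n : ℕ} (G : Fin n → Fin n → Prop) (E : ℝ) (hE0 : 0 ≤ E)
    (hE : ∀ v, ∑ w, miss G v w ≤ E) (X : Finset (Fin n))
    (hx : ∀ x ∈ X, ∀ y ∈ X, ∀ z ∈ X, G x y → G y x → G x z → G z x → ¬ (G y z ∧ G z y)) :
    (X.card : ℝ) ≤ 4 * E := by
  have h1 := square_le G E hE X
  have h2 : ∑ x ∈ X, ((X.card : ℝ) - 2 * E) ≤ ∑ u ∈ X, ∑ w ∈ X, nbi G u w :=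
    Finset.sum_le_sum (fun x hxX => nbrow_ge G E hE0 hE X x (hx x hxX))
  simp only [Finset.sum_const, nsmul_eq_mul] at h2
  by_contra hc
  push Not at hc
  nlinarith

lemma two_level {n : ℕ} (G : Fin n → Fin n → Prop) (E : ℝ) (hE0 : 0 ≤ E)
    (hE : ∀ v, ∑ w, miss G v w ≤ E) (X Y : Finset (Fin n)) (hXY : X ⊆ Y)
    (hx : ∀ x ∈ X, ∀ y ∈ Y, ∀ z ∈ Y, G x y → G y x → G x z → G z x → ¬ (G y z ∧ G z y)) :
    (X.card : ℝ) * (Y.card - 2 * E) ≤ E * Y.card + (X.card : ℝ) ^ 2 / 2 := by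
  have h2 : ∑ x ∈ X, ((Y.card : ℝ) - 2 * E) ≤ ∑ u ∈ X, ∑ w ∈ Y, nbi G u w :=
    Finset.sum_le_sum (fun x hxX => nbrow_ge G E hE0 hE Y x (hx x hxX))
  simp only [Finset.sum_const, nsmul_eq_mul] at h2
  have hsplit : ∀ f : Fin n → ℝ, ∑ w ∈ Y, f w = ∑ w ∈ Y \ X, f w + ∑ w ∈ X, f w :=
    fun f => (Finset.sum_sdiff hXY).symm
  have h3 : ∑ u ∈ X, ∑ w ∈ Y, nbi G u w
      = ∑ u ∈ X, ∑ w ∈ Y \ X, nbi G u w + ∑ u ∈ X, ∑ w ∈ X, nbi G u w := by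
    rw [← Finset.sum_add_distrib]
    exact Finset.sum_congr rfl (fun u _ => hsplit _)
  have h4 : ∑ u ∈ X, ∑ w ∈ Y \ X, nbi G u w
      ≤ ∑ u ∈ X, ∑ w ∈ Y \ X, miss G u w + ∑ u ∈ Y \ X, ∑ w ∈ X, miss G u w := by
    rw [Finset.sum_comm (s := Y \ X), ← Finset.sum_add_distrib]
    refine Finset.sum_le_sum (fun u _ => ?_)
    rw [← Finset.sum_add_distrib]
    exact Finset.sum_le_sum (fun w _ => nbi_le G u w)
  have h5 : ∑ u ∈ X, ∑ w ∈ X, nbi G u w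
      ≤ ∑ u ∈ X, ∑ w ∈ X, miss G u w + (X.card : ℝ) ^ 2 / 2 := by
    have e1 : ∑ u ∈ X, ∑ w ∈ X, nbi G u w
      ≤ ∑ u ∈ X, ∑ w ∈ X, (miss G u w / 2 + miss G w u / 2 + 1 / 2) := by
      refine Finset.sum_le_sum (fun u _ => Finset.sum_le_sum (fun w _ => ?_))
      have := nbi_le G u w
      have := nbi_le_one G u w
      linarith
    have e2 : ∑ u ∈ X, ∑ w ∈ X, miss G w u = ∑ u ∈ X, ∑ w ∈ X, miss G u w := Finset.sum_comm
    simp only [Finset.sum_add_distrib, ← Finset.sum_div, Finset.sum_const, nsmul_eq_mul, e2] at e1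
    linarith
  have h6 := block_le G E hE Y Y
  have h7 : ∑ u ∈ Y, ∑ w ∈ Y, miss G u w
      = ∑ u ∈ Y \ X, ∑ w ∈ Y, miss G u w + ∑ u ∈ X, ∑ w ∈ Y, miss G u w := hsplit _
  have h8 : ∑ u ∈ X, ∑ w ∈ Y, miss G u w
      = ∑ u ∈ X, ∑ w ∈ Y \ X, miss G u w + ∑ u ∈ X, ∑ w ∈ X, miss G u w := by
    rw [← Finset.sum_add_distrib]
    exact Finset.sum_congr rfl (fun u _ => hsplit _)
  have h9 : ∑ u ∈ Y \ X, ∑ w ∈ X, miss G u w ≤ ∑ u ∈ Y \ X, ∑ w ∈ Y, miss G u w :=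
    Finset.sum_le_sum (fun u _ => Finset.sum_le_sum_of_subset_of_nonneg hXY
      (fun w _ _ => miss_nonneg G u w))
  linarith

lemma numeric (n m a b E : ℝ) (hn : 0 < n) (hE0 : 0 ≤ E) (hE : E ≤ 0.0901 * n)
    (hm : 0.9099 * n ≤ m) (hbm : b ≤ m) (ha : a ≤ 4 * E)
    (h : a * (b - 2 * E) ≤ E * b + a ^ 2 / 2) :
    3 / 4 * n ≤ (m - a) + (m - b) / 2 := by
  by_contra hc
  push Not at hc
  have h1 : 0.1599 * n ≤ a := by linarith
  have h2 : 1.2297 * n - 2 * a ≤ b := by linarith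
  have h3 : 0 ≤ (b - (1.2297 * n - 2 * a)) * (a - E) :=
    mul_nonneg (by linarith) (by linarith)
  have h4 : 0 ≤ (a - 0.1599 * n) * (0.3604 * n - a) :=
    mul_nonneg (by linarith) (by linarith)
  have h5 : 0 ≤ n * (0.0901 * n - E) := mul_nonneg hn.le (by linarith)
  have h6 : 0 ≤ n * (a - 0.1599 * n) := mul_nonneg hn.le (by linarith)
  have h7 : 0 < n * n := mul_pos hn hn
  nlinarith

open MeasureTheory in
/-- Layer-cake inequality: if the weights sum to less than `M / 3`, some threshold is bad. -/
lemma layer {α : Type*} (N : Finset α) (c : α → ℝ) (hc : ∀ x ∈ N, 0 ≤ c x) (M : ℝ)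
    (h : ∀ t : ℝ, 0 < t → t < 1 / 3 →
      M ≤ ∑ x ∈ N, ((Set.Iio (c x)).indicator (fun _ => (1 : ℝ)) t
        + (Set.Ici (1 - 2 * c x)).indicator (fun _ => (1 / 2 : ℝ)) t)) :
    M / 3 ≤ ∑ x ∈ N, c x := by
  have hint1 : ∀ x, Integrable ((Set.Iio (c x)).indicator (fun _ => (1 : ℝ)))
      (volume.restrict (Set.Ioo (0 : ℝ) (1 / 3))) := fun x =>
    (integrable_const (1 : ℝ)).indicator measurableSet_Iio
  have hint2 : ∀ x, Integrable ((Set.Ici (1 - 2 * c x)).indicator (fun _ => (1 / 2 : ℝ)))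
      (volume.restrict (Set.Ioo (0 : ℝ) (1 / 3))) := fun x =>
    (integrable_const (1 / 2 : ℝ)).indicator measurableSet_Ici
  have h1 : ∫ _t in Set.Ioo (0 : ℝ) (1 / 3), M ≤ ∫ t in Set.Ioo (0 : ℝ) (1 / 3),
      ∑ x ∈ N, ((Set.Iio (c x)).indicator (fun _ => (1 : ℝ)) t
        + (Set.Ici (1 - 2 * c x)).indicator (fun _ => (1 / 2 : ℝ)) t) := by
    refine setIntegral_mono_on (integrable_const M) ?_ measurableSet_Ioo
      (fun t ht => h t ht.1 ht.2)
    exact integrable_finsetSum N (fun x _ => (hint1 x).add (hint2 x))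
  have h2 : ∫ t in Set.Ioo (0 : ℝ) (1 / 3),
      ∑ x ∈ N, ((Set.Iio (c x)).indicator (fun _ => (1 : ℝ)) t
        + (Set.Ici (1 - 2 * c x)).indicator (fun _ => (1 / 2 : ℝ)) t)
      = ∑ x ∈ N, ∫ t in Set.Ioo (0 : ℝ) (1 / 3),
        ((Set.Iio (c x)).indicator (fun _ => (1 : ℝ)) t
        + (Set.Ici (1 - 2 * c x)).indicator (fun _ => (1 / 2 : ℝ)) t) :=
    integral_finsetSum N (fun x _ => (hint1 x).add (hint2 x))
  rw [h2] at h1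
  have h0 : ∫ _t in Set.Ioo (0 : ℝ) (1 / 3), M = M / 3 := by
    simp; ring
  rw [h0] at h1
  refine h1.trans (Finset.sum_le_sum (fun x hx => ?_))
  have hcx := hc x hx
  rw [integral_add (hint1 x) (hint2 x), integral_indicator measurableSet_Iio,
    integral_indicator measurableSet_Ici, Measure.restrict_restrict measurableSet_Iio,
    Measure.restrict_restrict measurableSet_Ici]
  simp only [integral_const, smul_eq_mul, measureReal_restrict_apply_univ, mul_one]
  have b1 : volume.real (Set.Iio (c x) ∩ Set.Ioo (0 : ℝ) (1 / 3)) ≤ min (c x) (1 / 3) := by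
    have : volume.real (Set.Iio (c x) ∩ Set.Ioo (0 : ℝ) (1 / 3))
        ≤ volume.real (Set.Ioo (0 : ℝ) (min (c x) (1 / 3))) := by
      refine measureReal_mono ?_ (by simp)
      rintro t ⟨ht1, ht2, ht3⟩
      exact ⟨ht2, lt_min ht1 ht3⟩
    refine this.trans ?_
    rw [Real.volume_real_Ioo_of_le (le_min hcx (by norm_num))]
    simp
  have b2 : volume.real (Set.Ici (1 - 2 * c x) ∩ Set.Ioo (0 : ℝ) (1 / 3))
      ≤ max (1 / 3 - (1 - 2 * c x)) 0 := by
    have : volume.real (Set.Ici (1 - 2 * c x) ∩ Set.Ioo (0 : ℝ) (1 / 3))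
        ≤ volume.real (Set.Icc (1 - 2 * c x) (1 / 3)) := by
      refine measureReal_mono ?_ (by simp)
      rintro t ⟨ht1, ht2, ht3⟩
      exact ⟨ht1, ht3.le⟩
    refine this.trans ?_
    rw [Real.volume_real_Icc]
  rcases le_total (c x) (1 / 3) with h3 | h3
  · rw [min_eq_left h3] at b1
    rw [max_eq_right (by linarith)] at b2
    linarith
  · rw [min_eq_right h3] at b1
    rw [max_eq_left (by linarith)] at b2
    linarith

lemma cover_ge {n : ℕ} (hn : 0 < n) (G : Fin n → Fin n → Prop) (E : ℝ) (hE0 : 0 ≤ E)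
    (hE : ∀ v, ∑ w, miss G v w ≤ E) (hEn : E ≤ 0.0901 * n) (N : Finset (Fin n))
    (hN : 0.9099 * (n : ℝ) ≤ N.card) (c : Fin n → ℝ) (hc : ∀ x ∈ N, 0 ≤ c x)
    (hT : ∀ x ∈ N, ∀ y ∈ N, ∀ z ∈ N, G x y → G y x → G x z → G z x → G y z → G z y →
      1 ≤ c x + c y + c z) :
    (n : ℝ) / 4 ≤ ∑ x ∈ N, c x := by
  classical
  have key := layer N c hc (3 / 4 * n) (by
    intro t ht0 ht1
    set X := N.filter (fun x => c x ≤ t) with hX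
    set Y := N.filter (fun x => c x < (1 - t) / 2) with hY
    have hXY : X ⊆ Y := by
      intro x hx
      simp only [hX, hY, Finset.mem_filter] at hx ⊢
      exact ⟨hx.1, by linarith [hx.2]⟩
    have hno : ∀ x ∈ X, ∀ y ∈ Y, ∀ z ∈ Y, G x y → G y x → G x z → G z x →
        ¬ (G y z ∧ G z y) := by
      intro x hx y hy z hz h1 h2 h3 h4 h5
      simp only [hX, hY, Finset.mem_filter] at hx hy hz
      have := hT x hx.1 y hy.1 z hz.1 h1 h2 h3 h4 h5.1 h5.2
      linarith [hx.2, hy.2, hz.2]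
    have ha := tri_free_le G E hE0 hE X
      (fun x hx y hy z hz => hno x hx y (hXY hy) z (hXY hz))
    have hb := two_level G E hE0 hE X Y hXY hno
    have hYN : (Y.card : ℝ) ≤ N.card := by
      exact_mod_cast Finset.card_le_card (Finset.filter_subset _ _)
    have hnum := numeric n N.card X.card Y.card E (by exact_mod_cast hn) hE0 hEn hN hYN ha hb
    refine hnum.trans (le_of_eq ?_)
    have e1 : (X.card : ℝ) = ∑ x ∈ N, if c x ≤ t then (1 : ℝ) else 0 := by
      rw [hX, Finset.card_filter]; push_cast; rfl
    have e2 : (Y.card : ℝ) = ∑ x ∈ N, if c x < (1 - t) / 2 then (1 : ℝ) else 0 := by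
      rw [hY, Finset.card_filter]; push_cast; rfl
    have e3 : (N.card : ℝ) = ∑ x ∈ N, (1 : ℝ) := by simp
    rw [e1, e2, e3, ← Finset.sum_sub_distrib, ← Finset.sum_sub_distrib, Finset.sum_div,
      ← Finset.sum_add_distrib]
    refine Finset.sum_congr rfl (fun x _ => ?_)
    congr 1
    · by_cases h : c x ≤ t
      · have : t ∉ Set.Iio (c x) := by simpa using h
        simp [h]
      · simp [h, not_le.mp h]
    · by_cases h : c x < (1 - t) / 2
      · have : t ∉ Set.Ici (1 - 2 * c x) := by
          simp only [Set.mem_Ici, not_le]; linarith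
        rw [Set.indicator_of_notMem this, if_pos h]; norm_num
      · have : t ∈ Set.Ici (1 - 2 * c x) := by
          simp only [Set.mem_Ici]; linarith
        rw [Set.indicator_of_mem this, if_neg h]; norm_num)
  linarith

lemma isKrs_of_tri {n : ℕ} (G : Fin n → Fin n → Prop) (hirr : ∀ v, ¬ G v v)
    (v x y z : Fin n) (hx : G v x) (hy : G v y) (hz : G v z)
    (h1 : G x y) (h2 : G y x) (h3 : G x z) (h4 : G z x) (h5 : G y z) (h6 : G z y) :
    IsKrs G 4 2 {v, x, y, z} ∧
      ∀ f : Fin n → ℝ, ∑ u ∈ ({v, x, y, z} : Finset (Fin n)), f u = f v + (f x + (f y + f z)) := by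
  have ne : ∀ a b, G a b → a ≠ b := fun a b h e => hirr b (e ▸ h)
  have n1 := ne _ _ hx
  have n2 := ne _ _ hy
  have n3 := ne _ _ hz
  have n4 := ne _ _ h1
  have n5 := ne _ _ h3
  have n6 := ne _ _ h5
  have two : ∀ a b c : Fin n, b ≠ c → b ∈ ({v, x, y, z} : Finset (Fin n)) →
      c ∈ ({v, x, y, z} : Finset (Fin n)) → G a b → G a c →
      2 ≤ Set.ncard {u | u ∈ ({v, x, y, z} : Finset (Fin n)) ∧ G a u} := by
    intro a b c hbc hb hc hab hac
    rw [← Set.ncard_pair hbc]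
    refine Set.ncard_le_ncard ?_ (Set.toFinite _)
    rintro u (rfl | rfl)
    · exact ⟨hb, hab⟩
    · exact ⟨hc, hac⟩
  refine ⟨⟨?_, ?_, ?_⟩, ?_⟩
  · simp [n1, n2, n3, n4, n5, n6]
  · intro a ha b hb hab
    simp only [Finset.mem_insert, Finset.mem_singleton] at ha hb
    rcases ha with rfl | rfl | rfl | rfl <;> rcases hb with rfl | rfl | rfl | rfl <;> tauto
  · intro a ha
    simp only [Finset.mem_insert, Finset.mem_singleton] at ha
    rcases ha with rfl | rfl | rfl | rfl
    · exact two _ x y n4 (by simp) (by simp) hx hy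
    · exact two _ y z n6 (by simp) (by simp) h1 h3
    · exact two _ x z n5 (by simp) (by simp) h2 h5
    · exact two _ x y n4 (by simp) (by simp) h4 h6
  · intro f
    rw [Finset.sum_insert (by simp [n1, n2, n3]), Finset.sum_insert (by simp [n4, n5]),
      Finset.sum_insert (by simp [n6]), Finset.sum_singleton]

/-- No dual obstruction. -/
lemma no_dual {n : ℕ} (hn : 0 < n) (G : Fin n → Fin n → Prop) (hirr : ∀ v, ¬ G v v)
    (hdeg : ∀ v : Fin n, 0.9099 * (n : ℝ) ≤ (Set.ncard {w | G v w} : ℝ))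
    (y : Fin n → ℝ) (hy : ∀ S, IsKrs G 4 2 S → 0 ≤ ∑ u ∈ S, y u) : 0 ≤ ∑ u, y u := by
  classical
  by_contra hneg
  push Not at hneg
  have : Nonempty (Fin n) := ⟨⟨0, hn⟩⟩
  obtain ⟨v, hv⟩ := Finite.exists_min y
  have hcard : ∀ v, (Set.ncard {w | G v w} : ℝ) = ((Finset.univ.filter (fun w => G v w)).card : ℝ) := by
    intro v
    rw [← Set.ncard_coe_finset]
    simp
  have hmiss : ∀ v, ∑ w, miss G v w ≤ 0.0901 * (n : ℝ) := by
    intro v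
    have h1 := hdeg v
    rw [hcard v, Finset.card_filter] at h1
    push_cast at h1
    have h2 : ∑ w, miss G v w + ∑ w, (if G v w then (1 : ℝ) else 0) = n := by
      rw [← Finset.sum_add_distrib, Finset.sum_congr rfl (fun w _ =>
        (by unfold miss; by_cases h : G v w <;> simp [h] :
          miss G v w + (if G v w then (1 : ℝ) else 0) = 1))]
      simp
    linarith
  have hnR : (0 : ℝ) < n := by exact_mod_cast hn
  have hyv : y v < 0 := by
    by_contra h
    push Not at h
    exact absurd (Finset.sum_nonneg (fun u _ => h.trans (hv u))) (not_le.mpr hneg)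
  have hmain := cover_ge hn G (0.0901 * n) (by positivity) hmiss le_rfl
    (Finset.univ.filter (fun w => G v w)) (by rw [← hcard]; exact hdeg v)
    (fun u => (y u - y v) / (4 * (- y v)))
    (fun x _ => div_nonneg (by linarith [hv x]) (by linarith))
    (by
      intro a ha b hb c hc h1 h2 h3 h4 h5 h6
      simp only [Finset.mem_filter, Finset.mem_univ, true_and] at ha hb hc
      obtain ⟨hK, hs⟩ := isKrs_of_tri G hirr v a b c ha hb hc h1 h2 h3 h4 h5 h6
      have := hy _ hK
      rw [hs] at this
      rw [← add_div, ← add_div, le_div_iff₀ (by linarith)]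
      linarith)
  have hle : ∑ x ∈ Finset.univ.filter (fun w => G v w), (y x - y v) / (4 * (- y v))
      ≤ ∑ x, (y x - y v) / (4 * (- y v)) :=
    Finset.sum_le_sum_of_subset_of_nonneg (Finset.subset_univ _)
      (fun x _ _ => div_nonneg (by linarith [hv x]) (by linarith))
  have h3 := hmain.trans hle
  rw [← Finset.sum_div, le_div_iff₀ (by linarith), Finset.sum_sub_distrib] at h3
  simp only [Finset.sum_const, Finset.card_univ, Fintype.card_fin, nsmul_eq_mul] at h3
  linarith

/-- LP duality for perfect fractional tilings by 4-sets. -/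
lemma duality {n : ℕ} (hn : 0 < n) (P : Finset (Fin n) → Prop) (hP : ∀ S, P S → S.card = 4)
    (hd : ∀ y : Fin n → ℝ, (∀ S, P S → 0 ≤ ∑ u ∈ S, y u) → 0 ≤ ∑ u, y u) :
    ∃ ω : Finset (Fin n) → ℝ,
        (∀ S, 0 ≤ ω S ∧ ω S ≤ 1) ∧
        (∀ S, ω S ≠ 0 → P S) ∧
        (∀ v : Fin n, ∑ S ∈ Finset.univ.filter (fun S => v ∈ S), ω S = 1) := by
  classical
  have hnR : (0 : ℝ) < n := by exact_mod_cast hn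
  let ind : Finset (Fin n) → (Fin n → ℝ) := fun S v => if v ∈ S then 1 else 0
  let p : Fin n → ℝ := fun _ => 4 / n
  let F : Finset (Finset (Fin n)) := Finset.univ.filter P
  have hmem : p ∈ convexHull ℝ (Set.image ind (F : Set (Finset (Fin n)))) := by
    by_contra hnot
    have hclosed : IsClosed (convexHull ℝ (Set.image ind (F : Set (Finset (Fin n))))) :=
      ((F.finite_toSet.image ind).isCompact_convexHull (𝕜 := ℝ)).isClosed
    obtain ⟨f, s, hf1, hf2⟩ := geometric_hahn_banach_point_closed
      (convex_convexHull ℝ _) hclosed hnot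
    have hfsum : ∀ q : Fin n → ℝ, f q = ∑ u, q u * f (Pi.single u 1) := by
      intro q
      conv_lhs => rw [pi_eq_sum_univ' q]
      rw [map_sum]
      refine Finset.sum_congr rfl (fun u _ => ?_)
      rw [map_smul, smul_eq_mul]
    have h1 := hd (fun u => f (Pi.single u 1) - s / 4) (by
      intro S hS
      have h2 := hf2 (ind S) (subset_convexHull ℝ _ ⟨S, by simpa [F] using hS, rfl⟩)
      rw [hfsum] at h2
      have h3 : ∑ u, ind S u * f (Pi.single u 1) = ∑ u ∈ S, f (Pi.single u 1) := by
        simp [ind]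
      rw [h3] at h2
      rw [Finset.sum_sub_distrib, Finset.sum_const, hP S hS]
      simp only [nsmul_eq_mul]
      push_cast
      linarith)
    rw [hfsum, ← Finset.mul_sum] at hf1
    rw [Finset.sum_sub_distrib] at h1
    simp only [Finset.sum_const, Finset.card_univ, Fintype.card_fin, nsmul_eq_mul] at h1
    rw [div_mul_eq_mul_div, div_lt_iff₀ hnR] at hf1
    linarith
  have hmem2 : ∃ w : Finset (Fin n) → ℝ, (∀ S ∈ F, 0 ≤ w S) ∧ ∑ S ∈ F, w S = 1 ∧
      ∑ S ∈ F, w S • ind S = p := by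
    have hsub : convexHull ℝ (Set.image ind (F : Set (Finset (Fin n)))) ⊆
        {q | ∃ w : Finset (Fin n) → ℝ, (∀ S ∈ F, 0 ≤ w S) ∧ ∑ S ∈ F, w S = 1 ∧
          ∑ S ∈ F, w S • ind S = q} := by
      refine convexHull_min ?_ ?_
      · rintro _ ⟨T, hT, rfl⟩
        have hTF : T ∈ F := hT
        refine ⟨fun S => if S = T then 1 else 0, fun S _ => ?_, ?_, ?_⟩
        · dsimp only; split_ifs <;> norm_num
        · simp [hTF]
        · simp [hTF, ite_smul]
      · rintro q₁ ⟨w₁, a1, a2, a3⟩ q₂ ⟨w₂, b1, b2, b3⟩ r s hr hs hrs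
        refine ⟨fun S => r * w₁ S + s * w₂ S, fun S hS => ?_, ?_, ?_⟩
        · exact add_nonneg (mul_nonneg hr (a1 S hS)) (mul_nonneg hs (b1 S hS))
        · rw [Finset.sum_add_distrib, ← Finset.mul_sum, ← Finset.mul_sum, a2, b2]
          linarith
        · rw [← a3, ← b3, Finset.smul_sum, Finset.smul_sum, ← Finset.sum_add_distrib]
          exact Finset.sum_congr rfl (fun S _ => by rw [add_smul, mul_smul, mul_smul])
    exact hsub hmem
  obtain ⟨w, hw0, hw1, hwp⟩ := hmem2
  let ω : Finset (Fin n) → ℝ := fun S => if P S then n / 4 * w S else 0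
  have hω0 : ∀ S, 0 ≤ ω S := by
    intro S
    by_cases h : P S
    · simp only [ω, if_pos h]
      exact mul_nonneg (by positivity) (hw0 S (by simpa [F] using h))
    · simp [ω, h]
  have hsum : ∀ v : Fin n, ∑ S ∈ Finset.univ.filter (fun S => v ∈ S), ω S = 1 := by
    intro v
    have h1 := congrFun hwp v
    simp only [Finset.sum_apply, Pi.smul_apply, smul_eq_mul, ind, p, F, Finset.sum_filter] at h1
    rw [Finset.sum_filter]
    have h2 : ∑ S, (if v ∈ S then ω S else 0)
        = n / 4 * ∑ S, (if P S then w S * (if v ∈ S then 1 else 0) else 0) := by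
      rw [Finset.mul_sum]
      refine Finset.sum_congr rfl (fun S _ => ?_)
      by_cases h : P S <;> by_cases hvS : v ∈ S <;> simp [ω, h, hvS]
    rw [h2, h1]
    field_simp
  have hωP : ∀ S, ω S ≠ 0 → P S := by
    intro S hS
    by_contra h
    exact hS (by simp [ω, h])
  refine ⟨ω, fun S => ⟨hω0 S, ?_⟩, hωP, hsum⟩
  by_cases h : ω S = 0
  · rw [h]; norm_num
  · have h4 := hP S (hωP S h)
    obtain ⟨v, hv⟩ : S.Nonempty := Finset.card_pos.mp (by omega)
    rw [← hsum v]
    exact Finset.single_le_sum (f := ω) (fun T _ => hω0 T) (by simpa using hv)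

/-- Every sufficiently large digraph with minimum out-degree at least
`(2 + √(13/2) + γ)n/5` has a perfect fractional `(4,2)`-tiling. -/
theorem stmt_7 (γ : ℝ) (hγ : 0 < γ) :
    ∃ n₀ : ℕ, ∀ n, n₀ ≤ n → ∀ G : Fin n → Fin n → Prop, (∀ v, ¬ G v v) →
      (∀ v : Fin n, (2 + Real.sqrt (13 / 2) + γ) * n / 5 ≤ (Set.ncard {w | G v w} : ℝ)) →
      ∃ ω : Finset (Fin n) → ℝ,
        (∀ S, 0 ≤ ω S ∧ ω S ≤ 1) ∧
        (∀ S, ω S ≠ 0 → IsKrs G 4 2 S) ∧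
        (∀ v : Fin n, ∑ S ∈ Finset.univ.filter (fun S => v ∈ S), ω S = 1) := by
  refine ⟨1, fun n hn G hirr hdeg => ?_⟩
  have hs : (2.5495 : ℝ) ≤ Real.sqrt (13 / 2) := Real.le_sqrt_of_sq_le (by norm_num)
  have hnR : (0 : ℝ) < n := by exact_mod_cast hn
  refine duality hn (IsKrs G 4 2) (fun S h => h.1) (fun y hy => no_dual hn G hirr ?_ y hy)
  intro v
  refine le_trans ?_ (hdeg v)
  rw [le_div_iff₀ (by norm_num)]
  nlinarith
end

section
/- Let G be a graph on n vertices whose number of edges exceeds both C(2t−1, 2) and C(n,2) − C(n−t+1, 2). Then G contains a matching of size t. -/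
namespace EG

open Finset

variable {n : ℕ}

/-- Apply the transposition `(i j)` to a set of vertices. -/
def sw (i j : Fin n) (e : Finset (Fin n)) : Finset (Fin n) :=
  e.map (Equiv.swap i j).toEmbedding

lemma mem_sw (i j x : Fin n) (e : Finset (Fin n)) :
    x ∈ sw i j e ↔ Equiv.swap i j x ∈ e := by
  unfold sw
  rw [Finset.mem_map_equiv, Equiv.symm_swap]

lemma sw_sw (i j : Fin n) (e : Finset (Fin n)) : sw i j (sw i j e) = e := by
  ext x
  simp [mem_sw]

lemma card_sw (i j : Fin n) (e : Finset (Fin n)) : (sw i j e).card = e.card := by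
  simp [sw]

lemma sw_eq_self (i j : Fin n) (e : Finset (Fin n)) (hi : i ∉ e) (hj : j ∉ e) :
    sw i j e = e := by
  ext x
  rw [mem_sw]
  by_cases h1 : x = i
  · subst h1; simp [hi, hj]
  by_cases h2 : x = j
  · subst h2; simp [hi, hj]
  rw [Equiv.swap_apply_of_ne_of_ne h1 h2]

lemma sw_inj (i j : Fin n) : Function.Injective (sw i j) := fun a b h => by
  rw [← sw_sw i j a, h, sw_sw]

lemma disjoint_sw (i j : Fin n) {e f : Finset (Fin n)} (h : Disjoint e f) :
    Disjoint (sw i j e) (sw i j f) := by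
  unfold sw
  rwa [Finset.disjoint_map]

/-- Weight of a set. -/
def wt (e : Finset (Fin n)) : ℕ := ∑ x ∈ e, (x : ℕ)

lemma wt_sw_lt {i j : Fin n} (hij : i < j) {e : Finset (Fin n)} (hi : i ∉ e) (hj : j ∈ e) :
    wt (sw i j e) < wt e := by
  unfold wt sw
  rw [Finset.sum_map]
  apply Finset.sum_lt_sum
  · intro x hx
    by_cases h2 : x = j
    · subst h2; simpa using hij.le
    have h1 : x ≠ i := fun h => hi (h ▸ hx)
    simp [Equiv.swap_apply_of_ne_of_ne h1 h2]
  · exact ⟨j, hj, by simpa using hij⟩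

/-- The family has `t` pairwise disjoint members. -/
def HasM (t : ℕ) (E : Finset (Finset (Fin n))) : Prop :=
  ∃ M ⊆ E, M.card = t ∧ ∀ e ∈ M, ∀ f ∈ M, e ≠ f → Disjoint e f

open Classical in
/-- Shifting map. -/
noncomputable def sh (E : Finset (Finset (Fin n))) (i j : Fin n) (e : Finset (Fin n)) :
    Finset (Fin n) :=
  if i ∉ e ∧ j ∈ e ∧ sw i j e ∉ E then sw i j e else e

lemma sh_injOn (E : Finset (Finset (Fin n))) (i j : Fin n) : Set.InjOn (sh E i j) E := by
  intro a ha b hb h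
  unfold sh at h
  split_ifs at h with h1 h2 h2
  · exact sw_inj i j h
  · exact absurd (h ▸ hb) h1.2.2
  · exact absurd (h ▸ ha) h2.2.2
  · exact h

lemma hasM_of_shift {t : ℕ} (E : Finset (Finset (Fin n))) (i j : Fin n)
    (h : HasM t (E.image (sh E i j))) : HasM t E := by
  obtain ⟨M, hM, hc, hd⟩ := h
  by_cases hs : M ⊆ E
  · exact ⟨M, hs, hc, hd⟩
  obtain ⟨e0, he0, he0E⟩ := Finset.not_subset.1 hs
  have key : ∀ e ∈ M, e ∉ E → i ∈ e ∧ sw i j e ∈ E := by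
    intro e he heE
    obtain ⟨b, hb, hbe⟩ := Finset.mem_image.1 (hM he)
    unfold sh at hbe
    split_ifs at hbe with h1
    · subst hbe
      refine ⟨?_, by rwa [sw_sw]⟩
      rw [mem_sw]; simpa using h1.2.1
    · subst hbe; exact absurd hb heE
  have hi0 := (key e0 he0 he0E).1
  have hother : ∀ e ∈ M, e ≠ e0 → i ∉ e := fun e he hne hi =>
    Finset.disjoint_left.1 (hd e he e0 he0 hne) hi hi0
  refine ⟨M.image (sw i j), ?_, ?_, ?_⟩
  · intro f hf
    obtain ⟨e, he, rfl⟩ := Finset.mem_image.1 hf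
    by_cases hE : e ∈ E
    · have hne : e ≠ e0 := fun h => he0E (h ▸ hE)
      have hie := hother e he hne
      by_cases hje : j ∈ e
      · by_contra hcon
        obtain ⟨b, hb, hbe⟩ := Finset.mem_image.1 (hM he)
        unfold sh at hbe
        split_ifs at hbe with h1
        · subst hbe
          apply hie
          rw [mem_sw]; simpa using h1.2.1
        · subst hbe; exact h1 ⟨hie, hje, hcon⟩
      · rwa [sw_eq_self i j e hie hje]
    · exact (key e he hE).2
  · rw [Finset.card_image_of_injective _ (sw_inj i j), hc]
  · intro e he f hf hne
    obtain ⟨e, he1, rfl⟩ := Finset.mem_image.1 he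
    obtain ⟨f, hf1, rfl⟩ := Finset.mem_image.1 hf
    exact disjoint_sw i j (hd e he1 f hf1 fun h => hne (h ▸ rfl))

/-- Every family without `t` disjoint members may be replaced by a shifted one. -/
lemma exists_shifted {t : ℕ} (N : ℕ) : ∀ (E : Finset (Finset (Fin n))),
    (∑ e ∈ E, wt e) ≤ N → ¬ HasM t E → (∀ e ∈ E, e.card = 2) →
    ∃ E' : Finset (Finset (Fin n)), E'.card = E.card ∧ ¬ HasM t E' ∧ (∀ e ∈ E', e.card = 2) ∧
      ∀ i j, i < j → ∀ e ∈ E', i ∉ e → j ∈ e → sw i j e ∈ E' := by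
  induction N with
  | zero =>
    intro E hE hM h2
    refine ⟨E, rfl, hM, h2, ?_⟩
    intro i j hij e he hi hj
    exfalso
    have := wt_sw_lt hij hi hj
    have h3 : wt e ≤ ∑ e ∈ E, wt e := Finset.single_le_sum (fun _ _ => Nat.zero_le _) he
    omega
  | succ N ih =>
    intro E hE hM h2
    by_cases hs : ∀ i j, i < j → ∀ e ∈ E, i ∉ e → j ∈ e → sw i j e ∈ E
    · exact ⟨E, rfl, hM, h2, hs⟩
    push Not at hs
    obtain ⟨i, j, hij, e, he, hi, hj, hn⟩ := hs
    have hcard : (E.image (sh E i j)).card = E.card := Finset.card_image_of_injOn (sh_injOn E i j)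
    obtain ⟨E', h1, h3⟩ := ih (E.image (sh E i j)) (by
      rw [Finset.sum_image (sh_injOn E i j)]
      have : ∑ e ∈ E, wt (sh E i j e) < ∑ e ∈ E, wt e := by
        apply Finset.sum_lt_sum
        · intro f hf
          unfold sh
          split_ifs with h
          · exact (wt_sw_lt hij h.1 h.2.1).le
          · exact le_rfl
        · refine ⟨e, he, ?_⟩
          unfold sh
          rw [if_pos ⟨hi, hj, hn⟩]
          exact wt_sw_lt hij hi hj
      omega) (fun h => hM (hasM_of_shift E i j h)) (by
      intro f hf
      obtain ⟨b, hb, rfl⟩ := Finset.mem_image.1 hf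
      unfold sh
      split_ifs
      · rw [card_sw]; exact h2 b hb
      · exact h2 b hb)
    exact ⟨E', h1.trans hcard, h3⟩

lemma two_choose (m : ℕ) : 2 * ((m.choose 2 : ℕ) : ℤ) = m * (m - 1) := by
  induction m with
  | zero => simp
  | succ m ih =>
    rw [Nat.choose_succ_succ' m 1, Nat.choose_one_right]
    push_cast
    linarith

lemma arith (n t k : ℕ) (hk : k < t) (hn : 2 * t ≤ n) :
    (2 * t - 1 - k).choose 2 + k * (n - (2 * t - 1 - k)) ≤
      max ((2 * t - 1).choose 2) (n.choose 2 - (n - t + 1).choose 2) := by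
  obtain ⟨d, rfl⟩ := Nat.exists_eq_add_of_le hn
  obtain ⟨r, rfl⟩ := Nat.exists_eq_add_of_lt hk
  have e1 : 2 * (k + r + 1) - 1 - k = k + 2 * r + 1 := by omega
  have e2 : 2 * (k + r + 1) + d - (k + 2 * r + 1) = k + 1 + d := by omega
  have e3 : 2 * (k + r + 1) - 1 = 2 * k + 2 * r + 1 := by omega
  have e4 : 2 * (k + r + 1) + d - (k + r + 1) + 1 = k + r + d + 2 := by omega
  rw [e1, e2, e3, e4, le_max_iff]
  have a1 := two_choose (k + 2 * r + 1)
  have a2 := two_choose (2 * k + 2 * r + 1)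
  have a3 := two_choose (2 * (k + r + 1) + d)
  have a4 := two_choose (k + r + d + 2)
  by_contra hcon
  push Not at hcon
  obtain ⟨h1, h2⟩ := hcon
  have h2' : (2 * (k + r + 1) + d).choose 2 <
    (k + 2 * r + 1).choose 2 + k * (k + 1 + d) + (k + r + d + 2).choose 2 := by omega
  zify at h1 h2'
  push_cast at a1 a2 a3 a4 h1 h2'
  have b1 : (0 : ℤ) < k * (2 * d + 1 - k - 4 * r) := by nlinarith
  have b2 : (r : ℤ) * (2 * k + 2 * d + 1 - r) < 0 := by nlinarith
  have c1 : (0 : ℤ) < 2 * d + 1 - k - 4 * r := pos_of_mul_pos_right b1 (by positivity)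
  nlinarith

lemma shifted_bound {t : ℕ} (hn : 2 * t ≤ n) (E : Finset (Finset (Fin n)))
    (hM : ¬ HasM t E) (h2 : ∀ e ∈ E, e.card = 2)
    (hs : ∀ i j, i < j → ∀ e ∈ E, i ∉ e → j ∈ e → sw i j e ∈ E) :
    E.card ≤ max ((2 * t - 1).choose 2) (n.choose 2 - (n - t + 1).choose 2) := by
  have hs' : ∀ i j x : Fin n, i ≤ j → x ≠ i → x ≠ j → ({j, x} : Finset (Fin n)) ∈ E →
      ({i, x} : Finset (Fin n)) ∈ E := by
    intro i j x hij hxi hxj he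
    rcases hij.eq_or_lt with rfl | hij
    · exact he
    have := hs i j hij _ he (by simp [hij.ne, hxi.symm]) (by simp)
    convert this using 1
    simp [sw, Finset.map_insert, Equiv.swap_apply_of_ne_of_ne hxi hxj]
  have hk : ∃ k : ℕ, ∃ hk : k < t, ({⟨k, by omega⟩, ⟨2 * t - 1 - k, by omega⟩} :
      Finset (Fin n)) ∉ E := by
    by_contra hcon
    push Not at hcon
    apply hM
    let g : Fin t → Finset (Fin n) := fun k =>
      {⟨k, by omega⟩, ⟨2 * t - 1 - k, by omega⟩}
    have hg : ∀ a b : Fin t, a ≠ b → Disjoint (g a) (g b) := by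
      intro a b hab
      have : (a : ℕ) ≠ b := fun h => hab (Fin.ext h)
      simp only [g, Finset.disjoint_left, Finset.mem_insert, Finset.mem_singleton]
      rintro x (rfl | rfl) (h | h) <;> simp only [Fin.mk.injEq] at h <;> omega
    have hinj : Function.Injective g := by
      intro a b h
      by_contra hab
      have := hg a b hab
      rw [h, disjoint_self] at this
      simp [g] at this
    refine ⟨Finset.univ.image g, ?_, ?_, ?_⟩
    · intro e he
      obtain ⟨a, -, rfl⟩ := Finset.mem_image.1 he
      exact hcon a a.2
    · rw [Finset.card_image_of_injective _ hinj]; simp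
    · intro e he f hf hne
      obtain ⟨a, -, rfl⟩ := Finset.mem_image.1 he
      obtain ⟨b, -, rfl⟩ := Finset.mem_image.1 hf
      exact hg a b fun h => hne (h ▸ rfl)
  obtain ⟨k, hkt, hk⟩ := hk
  refine le_trans ?_ (arith n t k hkt hn)
  set m := 2 * t - 1 - k with hm
  have hmn : m < n := by omega
  have hkm : k < m := by omega
  let A : Finset (Fin n) := univ.filter (fun x => (x : ℕ) < m)
  let B : Finset (Fin n) := univ.filter (fun x => ¬ (x : ℕ) < m)
  let C : Finset (Fin n) := univ.filter (fun x => (x : ℕ) < k)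
  have hA : A.card = m := by
    simp only [A, Fin.card_filter_val_lt]; omega
  have hC : C.card = k := by
    simp only [C, Fin.card_filter_val_lt]; omega
  have hB : B.card = n - m := by
    have := Finset.card_filter_add_card_filter_not (s := (univ : Finset (Fin n)))
      (fun x => (x : ℕ) < m)
    simp only [Finset.card_univ, Fintype.card_fin] at this
    change A.card + B.card = n at this
    omega
  have hsub : E ⊆ A.powersetCard 2 ∪ (C ×ˢ B).image (fun p => {p.1, p.2}) := by
    have main : ∀ a b : Fin n, a < b → ({a, b} : Finset (Fin n)) ∈ E →
        ({a, b} : Finset (Fin n)) ∈ A.powersetCard 2 ∪ (C ×ˢ B).image (fun p => {p.1, p.2}) := by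
      intro a b hab he
      rw [Finset.mem_union]
      by_cases hb : (b : ℕ) < m
      · left
        rw [Finset.mem_powersetCard]
        refine ⟨?_, h2 _ he⟩
        intro x hx
        simp only [Finset.mem_insert, Finset.mem_singleton] at hx
        have : (a : ℕ) < b := hab
        simp only [A, Finset.mem_filter, Finset.mem_univ, true_and]
        rcases hx with rfl | rfl <;> omega
      · right
        rw [Finset.mem_image]
        refine ⟨(a, b), ?_, rfl⟩
        simp only [A, B, C, Finset.mem_product, Finset.mem_filter, Finset.mem_univ, true_and]
        refine ⟨?_, hb⟩
        by_contra hak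
        apply hk
        have hab' : (a : ℕ) < b := hab
        have s1 := hs' ⟨k, by omega⟩ a b (Fin.le_def.2 (by simpa using hak))
          (fun h => by rw [h] at hb; exact hb hkm) hab.ne' he
        rw [Finset.pair_comm] at s1
        have s2 := hs' ⟨m, hmn⟩ b ⟨k, by omega⟩ (Fin.le_def.2 (by simpa using hb))
          (fun h => by simp only [Fin.mk.injEq] at h; omega)
          (fun h => by rw [← h] at hb; exact hb hkm) s1
        rw [Finset.pair_comm] at s2
        exact s2
    intro e he
    obtain ⟨a, b, hab, rfl⟩ := Finset.card_eq_two.1 (h2 e he)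
    rcases lt_or_gt_of_ne hab with h | h
    · exact main a b h he
    · rw [Finset.pair_comm] at he ⊢
      exact main b a h he
  calc E.card ≤ _ := Finset.card_le_card hsub
    _ ≤ _ := Finset.card_union_le _ _
    _ ≤ m.choose 2 + k * (n - m) := by
      rw [Finset.card_powersetCard, hA]
      gcongr
      refine Finset.card_image_le.trans ?_
      rw [Finset.card_product, hC, hB]

end EG

/-- Erdős–Gallai: a graph on `n` vertices with more than
`max (C(2t-1,2)) (C(n,2) - C(n-t+1,2))` edges contains a matching of size `t`. -/
theorem stmt_9 (n t : ℕ) (G : SimpleGraph (Fin n))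
    (h : max ((2 * t - 1).choose 2) (n.choose 2 - (n - t + 1).choose 2) < G.edgeSet.ncard) :
    ∃ M : Finset (Fin n × Fin n), M.card = t ∧
      (∀ p ∈ M, G.Adj p.1 p.2) ∧
      (∀ p ∈ M, ∀ q ∈ M, p ≠ q →
        p.1 ≠ q.1 ∧ p.1 ≠ q.2 ∧ p.2 ≠ q.1 ∧ p.2 ≠ q.2) := by
  classical
  let E : Finset (Finset (Fin n)) :=
    Finset.univ.filter (fun e => ∃ a b, G.Adj a b ∧ e = {a, b})
  have h2 : ∀ e ∈ E, e.card = 2 := by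
    intro e he
    obtain ⟨a, b, hab, rfl⟩ := (Finset.mem_filter.1 he).2
    exact Finset.card_pair hab.ne
  have hcard : G.edgeSet.ncard ≤ E.card := by
    rw [← Set.ncard_coe_finset]
    refine Set.ncard_le_ncard_of_injOn Sym2.toFinset ?_ ?_ (Finset.finite_toSet _)
    · intro e he
      induction e with | _ a b
      simp only [E, Finset.coe_filter, Set.mem_setOf_eq, Finset.mem_univ, true_and]
      refine ⟨a, b, he, ?_⟩
      ext x; simp
    · intro e he f hf hef
      ext x
      rw [← Sym2.mem_toFinset, hef, Sym2.mem_toFinset]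
  have hn : 2 * t ≤ n := by
    by_contra hcon
    have h3 : E ⊆ Finset.univ.powersetCard 2 := fun e he =>
      Finset.mem_powersetCard.2 ⟨Finset.subset_univ _, h2 e he⟩
    have h4 := Finset.card_le_card h3
    rw [Finset.card_powersetCard, Finset.card_univ, Fintype.card_fin] at h4
    have h5 : n.choose 2 ≤ (2 * t - 1).choose 2 := Nat.choose_le_choose 2 (by omega)
    have h6 := le_max_left ((2 * t - 1).choose 2) (n.choose 2 - (n - t + 1).choose 2)
    omega
  have hM : EG.HasM t E := by
    by_contra hM
    obtain ⟨E', h1, h3, h4, h5⟩ := EG.exists_shifted _ E le_rfl hM h2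
    have := EG.shifted_bound hn E' h3 h4 h5
    omega
  obtain ⟨M, hME, hMc, hd⟩ := hM
  have hch : ∀ e : Finset (Fin n), ∃ p : Fin n × Fin n, e ∈ E → G.Adj p.1 p.2 ∧ e = {p.1, p.2} := by
    intro e
    by_cases he : e ∈ E
    · obtain ⟨a, b, hab, rfl⟩ := (Finset.mem_filter.1 he).2
      exact ⟨(a, b), fun _ => ⟨hab, rfl⟩⟩
    · by_cases hne : Nonempty (Fin n × Fin n)
      · exact ⟨hne.some, fun h => absurd h he⟩
      · exfalso
        have : G.edgeSet = ∅ := by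
          ext x
          induction x with | _ a b
          exact absurd ⟨(a, b)⟩ hne
        rw [this] at h
        simp at h
  choose g hg using hch
  refine ⟨M.image g, ?_, ?_, ?_⟩
  · rw [Finset.card_image_of_injOn, hMc]
    intro e he f hf hef
    rw [(hg e (hME he)).2, (hg f (hME hf)).2, hef]
  · intro p hp
    obtain ⟨e, he, rfl⟩ := Finset.mem_image.1 hp
    exact (hg e (hME he)).1
  · intro p hp q hq hpq
    obtain ⟨e, he, rfl⟩ := Finset.mem_image.1 hp
    obtain ⟨f, hf, rfl⟩ := Finset.mem_image.1 hq
    have hdis := hd e he f hf fun h => hpq (h ▸ rfl)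
    rw [(hg e (hME he)).2, (hg f (hME hf)).2] at hdis
    simp only [Finset.disjoint_insert_left, Finset.disjoint_singleton_left, Finset.mem_insert,
      Finset.mem_singleton, not_or] at hdis
    exact ⟨hdis.1.1, hdis.1.2, hdis.2.1, hdis.2.2⟩
end

section
/- Let r ≥ 3, ε > 0 and n sufficiently large, and let G be an edge-coloured graph on n vertices with minimum colour degree at least (1 − 1/(2(r−1)) + ε)n. Then for every pair of distinct vertices x, y there exist at least ηn^{r−1} ordered (r−1)-tuples (v_1, …, v_{r−1}) of vertices, where η > 0 depends only on ε and r, such that both {x, v_1, …, v_{r−1}} and {y, v_1, …, v_{r−1}} induce rainbow copies of K_r in G. -/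
/-- `S` spans a rainbow copy of `K_r` in the edge-coloured graph `(G, c)`. -/
def RainbowClique {n : ℕ} (G : SimpleGraph (Fin n)) (c : Fin n → Fin n → ℕ) (r : ℕ)
    (S : Finset (Fin n)) : Prop :=
  S.card = r ∧ (∀ a ∈ S, ∀ b ∈ S, a ≠ b → G.Adj a b) ∧
    ∀ a ∈ S, ∀ b ∈ S, ∀ a' ∈ S, ∀ b' ∈ S, a ≠ b → a' ≠ b' →
      ({a, b} : Finset (Fin n)) ≠ {a', b'} → c a b ≠ c a' b'

open Classical in
lemma rc_insert {n : ℕ} (G : SimpleGraph (Fin n)) (c : Fin n → Fin n → ℕ)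
    (hc : ∀ u v, c u v = c v u) (m : ℕ) (T : Finset (Fin n)) (v : Fin n) (hv : v ∉ T)
    (hT : RainbowClique G c m T) (hadj : ∀ p ∈ T, G.Adj v p)
    (h1 : ∀ p ∈ T, ∀ q ∈ T, p ≠ q → c v p ≠ c v q)
    (h2 : ∀ p ∈ T, ∀ q ∈ T, ∀ q' ∈ T, c v p ≠ c q q') :
    RainbowClique G c (m + 1) (insert v T) := by
  obtain ⟨hcard, hA, hR⟩ := hT
  refine ⟨by rw [Finset.card_insert_of_notMem hv, hcard], ?_, ?_⟩
  · intro a ha b hb hab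
    rw [Finset.mem_insert] at ha hb
    rcases ha with rfl | ha <;> rcases hb with rfl | hb
    · exact absurd rfl hab
    · exact hadj b hb
    · exact (hadj a ha).symm
    · exact hA a ha b hb hab
  · intro a ha b hb a' ha' b' hb' hab hab' hne
    rw [Finset.mem_insert] at ha hb ha' hb'
    rcases ha with rfl | ha
    · rcases hb with rfl | hb
      · exact absurd rfl hab
      rcases ha' with rfl | ha'
      · rcases hb' with rfl | hb'
        · exact absurd rfl hab'
        · exact h1 b hb b' hb' (fun h => hne (by rw [h]))
      · rcases hb' with rfl | hb'
        · rw [hc a' b']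
          exact h1 b hb a' ha' (fun h => hne (by rw [h, Finset.pair_comm]))
        · exact h2 b hb a' ha' b' hb'
    · rcases hb with rfl | hb
      · rw [hc a b]
        rcases ha' with rfl | ha'
        · rcases hb' with rfl | hb'
          · exact absurd rfl hab'
          · exact h1 a ha b' hb' (fun h => hne (by rw [h, Finset.pair_comm]))
        · rcases hb' with rfl | hb'
          · rw [hc a' b']
            exact h1 a ha a' ha' (fun h => hne (by rw [h]))
          · exact h2 a ha a' ha' b' hb'
      · rcases ha' with rfl | ha'
        · rcases hb' with rfl | hb'
          · exact absurd rfl hab'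
          · exact (h2 b' hb' a ha b hb).symm
        · rcases hb' with rfl | hb'
          · rw [hc a' b']
            exact (h2 a' ha' a ha b hb).symm
          · exact hR a ha b hb a' ha' b' hb' hab hab' hne

open Classical in
/-- Averaging: many vertices have large bidirected degree inside `W`. -/
lemma avg {V : Type*} [DecidableEq V] (A : V → Finset V) (W : Finset V) (a d L : ℕ)
    (hW : ∀ w ∈ W, (W \ A w).card ≤ a) (hd : 0 < d) (h : 2 * a + d + L ≤ W.card) :
    d ≤ (W.filter (fun v => L ≤ (W.filter (fun w => w ∈ A v ∧ v ∈ A w)).card)).card := by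
  set B : V → Finset V := fun v => W.filter (fun w => w ∈ A v ∧ v ∈ A w) with hB
  set Γ := W.filter (fun v => L ≤ (B v).card) with hΓ
  have hWpos : 0 < W.card := by omega
  have h1 : ∀ v ∈ W, W.card ≤ (B v).card + ((W.filter (fun w => w ∉ A v)).card
      + (W.filter (fun w => v ∉ A w)).card) := by
    intro v _
    have : W ⊆ B v ∪ (W.filter (fun w => w ∉ A v) ∪ W.filter (fun w => v ∉ A w)) := by
      intro w hw
      simp only [hB, Finset.mem_union, Finset.mem_filter, hw, true_and]
      tauto
    calc W.card ≤ _ := Finset.card_le_card this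
      _ ≤ _ := Finset.card_union_le _ _
      _ ≤ _ := by gcongr; exact Finset.card_union_le _ _
  have hout : ∑ v ∈ W, (W.filter (fun w => w ∉ A v)).card ≤ W.card * a := by
    rw [← smul_eq_mul]
    apply Finset.sum_le_card_nsmul
    intro v hv
    have := hW v hv
    rwa [← Finset.filter_notMem_eq_sdiff] at this
  have hin : ∑ v ∈ W, (W.filter (fun w => v ∉ A w)).card
      = ∑ v ∈ W, (W.filter (fun w => w ∉ A v)).card := by
    simp only [Finset.card_filter]
    exact Finset.sum_comm
  have h2 : W.card * W.card ≤ ∑ v ∈ W, (B v).card + (W.card * a + W.card * a) := by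
    calc W.card * W.card = ∑ v ∈ W, W.card := by simp
      _ ≤ _ := Finset.sum_le_sum h1
      _ = _ := by rw [Finset.sum_add_distrib, Finset.sum_add_distrib]
      _ ≤ _ := by rw [hin]; gcongr
  have h3 : ∑ v ∈ W, (B v).card ≤ Γ.card * W.card + W.card * L := by
    calc ∑ v ∈ W, (B v).card ≤ ∑ v ∈ W, ((if L ≤ (B v).card then W.card else 0) + L) := by
          apply Finset.sum_le_sum
          intro v _
          split_ifs with hl
          · exact (Finset.card_le_card (Finset.filter_subset _ _)).trans (by omega)
          · omega
      _ = _ := by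
          rw [Finset.sum_add_distrib, ← Finset.sum_filter]
          simp [hΓ]
  have h4 : W.card * W.card ≤ W.card * (Γ.card + L + 2 * a) := by nlinarith
  have h5 := Nat.le_of_mul_le_mul_left h4 hWpos
  omega

open Classical in
lemma greedy {n : ℕ} (G : SimpleGraph (Fin n)) (c : Fin n → Fin n → ℕ)
    (hc : ∀ u v, c u v = c v u) (x y : Fin n) (r a d C : ℕ)
    (hC : (r + 1) ^ 3 ≤ C) (hCd : C < d)
    (O A : Fin n → Finset (Fin n))
    (hO : ∀ v, ∀ w ∈ O v, G.Adj v w)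
    (hinj : ∀ v, ∀ p ∈ O v, ∀ q ∈ O v, c v p = c v q → p = q)
    (hA : ∀ v, A v ⊆ O v)
    (hAx : ∀ v, ∀ w ∈ A v, c v w ≠ c v x) (hAy : ∀ v, ∀ w ∈ A v, c v w ≠ c v y)
    (hmiss : ∀ v, (Finset.univ \ A v).card ≤ a) :
    ∀ (k : ℕ) (S W : Finset (Fin n)), S.card + k + 1 = r →
      RainbowClique G c (S.card + 1) (insert x S) →
      RainbowClique G c (S.card + 1) (insert y S) →
      (∀ w ∈ W, w ∈ O x ∧ w ∈ O y ∧ ∀ s ∈ S, w ∈ A s ∧ s ∈ A w) →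
      k * (2 * a + d) ≤ W.card + 2 * a →
      (d - C) ^ k ≤ (Finset.univ.filter (fun t : Fin k → Fin n =>
        RainbowClique G c r (insert x (S ∪ Finset.image t Finset.univ)) ∧
        RainbowClique G c r (insert y (S ∪ Finset.image t Finset.univ)))).card := by
  intro k
  induction k with
  | zero =>
    intro S W hr hx hy _ _
    rw [pow_zero, Nat.one_le_iff_ne_zero, ← Nat.pos_iff_ne_zero, Finset.card_pos]
    refine ⟨Fin.elim0, ?_⟩
    have : r = S.card + 1 := by omega
    subst this
    rw [Finset.mem_filter]
    refine ⟨Finset.mem_univ _, ?_⟩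
    have e : S ∪ Finset.image (Fin.elim0 : Fin 0 → Fin n) Finset.univ = S := by simp
    rw [e]
    exact ⟨hx, hy⟩
  | succ k ih =>
    intro S W hr hx hy hW hsize
    set B : Fin n → Finset (Fin n) := fun v => W.filter (fun w => w ∈ A v ∧ v ∈ A w) with hB
    set Γ := W.filter (fun v => k * (2 * a + d) - 2 * a ≤ (B v).card) with hΓ
    have hsize' : k * (2 * a + d) + d ≤ W.card := by
      rw [add_mul] at hsize; omega
    have hΓd : d ≤ Γ.card := by
      rcases Nat.eq_zero_or_pos k with rfl | hk
      · have : Γ = W := by simp [hΓ]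
        rw [this]; omega
      · apply avg A W a d _ (fun w _ => (Finset.card_le_card (Finset.sdiff_subset_sdiff (Finset.subset_univ _) le_rfl)).trans (hmiss w)) (by omega)
        have : 2 * a + d ≤ k * (2 * a + d) := Nat.le_mul_of_pos_left _ hk
        omega
    set P := insert x (insert y S) with hP
    set Bad := (P ×ˢ P ×ˢ P).biUnion (fun q => (O q.1).filter (fun v => c q.1 v = c q.2.1 q.2.2))
      with hBad
    have hBadC : Bad.card ≤ C := by
      have hPc : P.card ≤ r + 1 := by
        have h1 : P.card ≤ _ := Finset.card_insert_le x (insert y S)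
        have h2 := Finset.card_insert_le y S
        omega
      calc Bad.card ≤ (P ×ˢ P ×ˢ P).card * 1 := by
            apply Finset.card_biUnion_le_card_mul
            intro q _
            rw [Finset.card_le_one]
            intro u hu v hv
            rw [Finset.mem_filter] at hu hv
            exact hinj _ u hu.1 v hv.1 (hu.2.trans hv.2.symm)
        _ = P.card ^ 3 := by simp only [Finset.card_product]; ring
        _ ≤ (r + 1) ^ 3 := Nat.pow_le_pow_left hPc 3
        _ ≤ C := hC
    have hcard : d - C ≤ (Γ \ Bad).card := by
      have := Finset.le_card_sdiff Bad Γ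
      omega
    have key : ∀ v ∈ Γ \ Bad, (d - C) ^ k ≤ (Finset.univ.filter (fun t : Fin k → Fin n =>
        RainbowClique G c r (insert x (insert v S ∪ Finset.image t Finset.univ)) ∧
        RainbowClique G c r (insert y (insert v S ∪ Finset.image t Finset.univ)))).card := by
      intro v hv
      rw [Finset.mem_sdiff, hΓ, Finset.mem_filter] at hv
      obtain ⟨⟨hvW, hvL⟩, hvB⟩ := hv
      obtain ⟨hvx, hvy, hvS⟩ := hW v hvW
      have hvnS : v ∉ S := fun h => (hO v v (hA v (hvS v h).1)).ne rfl
      have hcS : (insert v S).card = S.card + 1 := Finset.card_insert_of_notMem hvnS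
      have hPO : ∀ p ∈ P, v ∈ O p := by
        intro p hp
        simp only [hP, Finset.mem_insert] at hp
        rcases hp with rfl | rfl | hp
        · exact hvx
        · exact hvy
        · exact hA _ (hvS p hp).1
      have hnb : ∀ p ∈ P, ∀ q ∈ P, ∀ q' ∈ P, c v p ≠ c q q' := by
        intro p hp q hq q' hq' h
        apply hvB
        rw [hBad, Finset.mem_biUnion]
        refine ⟨(p, q, q'), ?_, ?_⟩
        · simp only [Finset.mem_product]; exact ⟨hp, hq, hq'⟩
        · rw [Finset.mem_filter]; exact ⟨hPO p hp, by rw [hc]; exact h⟩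
      have ext : ∀ z, z ∈ P → v ∈ O z → (∀ v, ∀ w ∈ A v, c v w ≠ c v z) →
          RainbowClique G c (S.card + 1) (insert z S) →
          RainbowClique G c (S.card + 1 + 1) (insert z (insert v S)) := by
        intro z hzP hvz hAz hz
        have hsub : insert z S ⊆ P := by
          intro p hp
          rcases Finset.mem_insert.1 hp with rfl | hp
          · exact hzP
          · simp [hP, hp]
        rw [Finset.insert_comm]
        apply rc_insert G c hc _ _ _ _ hz
        · intro p hp
          exact (hO p v (hPO p (hsub hp))).symm
        · intro p hp q hq hpq
          rcases Finset.mem_insert.1 hp with rfl | hpS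
          · rcases Finset.mem_insert.1 hq with rfl | hqS
            · exact absurd rfl hpq
            · exact (hAz v q (hvS q hqS).2).symm
          · rcases Finset.mem_insert.1 hq with rfl | hqS
            · exact hAz v p (hvS p hpS).2
            · exact fun h => hpq (hinj v p (hA _ (hvS p hpS).2) q (hA _ (hvS q hqS).2) h)
        · intro p hp q hq q' hq'
          exact hnb p (hsub hp) q (hsub hq) q' (hsub hq')
        · rw [Finset.mem_insert]
          rintro (rfl | h)
          · exact (hO v v hvz).ne rfl
          · exact hvnS h
      apply ih (insert v S) (B v)
      · omega
      · rw [hcS]; exact ext x (by simp [hP]) hvx hAx hx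
      · rw [hcS]; exact ext y (by simp [hP]) hvy hAy hy
      · intro w hw
        rw [hB, Finset.mem_filter] at hw
        obtain ⟨h1, h2, h3⟩ := hW w hw.1
        refine ⟨h1, h2, ?_⟩
        intro s hs
        rcases Finset.mem_insert.1 hs with rfl | hs
        · exact hw.2
        · exact h3 s hs
      · omega
    set F : Fin n → Finset (Fin k → Fin n) := fun v => Finset.univ.filter (fun t : Fin k → Fin n =>
        RainbowClique G c r (insert x (insert v S ∪ Finset.image t Finset.univ)) ∧
        RainbowClique G c r (insert y (insert v S ∪ Finset.image t Finset.univ))) with hF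
    calc (d - C) ^ (k + 1) = (d - C) * (d - C) ^ k := by ring
      _ ≤ (Γ \ Bad).card * (d - C) ^ k := Nat.mul_le_mul_right _ hcard
      _ = ∑ v ∈ Γ \ Bad, (d - C) ^ k := by simp
      _ ≤ ∑ v ∈ Γ \ Bad, (F v).card := Finset.sum_le_sum key
      _ = ((Γ \ Bad).sigma F).card := (Finset.card_sigma _ _).symm
      _ ≤ _ := by
        apply Finset.card_le_card_of_injOn
          (fun p : (Σ _ : Fin n, (Fin k → Fin n)) => (Fin.cons p.1 p.2 : Fin (k + 1) → Fin n))
        · rintro ⟨v, t⟩ hp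
          have hp2 := (Finset.mem_sigma.1 (Finset.mem_coe.1 hp)).2
          simp only [hF, Finset.mem_filter, Finset.mem_univ, true_and] at hp2
          have e : insert v S ∪ Finset.image t Finset.univ
              = S ∪ Finset.image (Fin.cons v t : Fin (k + 1) → Fin n) Finset.univ := by
            ext u
            simp only [Finset.mem_union, Finset.mem_insert, Finset.mem_image, Finset.mem_univ,
              true_and, Fin.exists_fin_succ, Fin.cons_zero, Fin.cons_succ]
            rw [eq_comm (a := u) (b := v)]
            tauto
          rw [e] at hp2
          simp only [Finset.coe_filter, Finset.mem_univ, true_and, Set.mem_ofPred_eq]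
          exact hp2
        · rintro ⟨v, t⟩ _ ⟨v', t'⟩ _ h
          have := Fin.cons_injective2 h
          obtain ⟨rfl, rfl⟩ := this
          rfl

open Classical in
lemma exists_out {n : ℕ} (G : SimpleGraph (Fin n)) (c : Fin n → Fin n → ℕ) (v : Fin n) :
    ∃ O : Finset (Fin n), (∀ w ∈ O, G.Adj v w) ∧
      (∀ p ∈ O, ∀ q ∈ O, c v p = c v q → p = q) ∧
      O.card = Set.ncard ((c v) '' {w | G.Adj v w}) := by
  obtain ⟨u, hu, hbij⟩ := Set.SurjOn.exists_bijOn_subset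
    (Set.surjOn_image (c v) {w | G.Adj v w})
  refine ⟨u.toFinset, ?_, ?_, ?_⟩
  · intro w hw; exact hu (by simpa using hw)
  · intro p hp q hq h
    exact hbij.injOn (by simpa using hp) (by simpa using hq) h
  · rw [← hbij.image_eq, hbij.injOn.ncard_image, Set.ncard_eq_toFinset_card']

/-- An edge-coloured graph with minimum colour degree at least `(1 - 1/(2(r-1)) + ε)n`
is `(1, η; K_r)`-closed: every pair `x ≠ y` has at least `η n^{r-1}` connectors. -/
theorem stmt_16 (r : ℕ) (hr : 3 ≤ r) (ε : ℝ) (hε : 0 < ε) :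
    ∃ η : ℝ, 0 < η ∧ ∃ n₀ : ℕ, ∀ n, n₀ ≤ n →
      ∀ (G : SimpleGraph (Fin n)) (c : Fin n → Fin n → ℕ),
        (∀ u v, c u v = c v u) →
        (∀ v : Fin n, (1 - 1 / (2 * ((r : ℝ) - 1)) + ε) * n ≤
          (Set.ncard ((c v) '' {w | G.Adj v w}) : ℝ)) →
        ∀ x y : Fin n, x ≠ y →
          η * (n : ℝ) ^ (r - 1) ≤
            (Set.ncard {t : Fin (r - 1) → Fin n |
              RainbowClique G c r (insert x (Finset.image t Finset.univ)) ∧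
              RainbowClique G c r (insert y (Finset.image t Finset.univ))} : ℝ) := by
  classical
  set C : ℕ := (r + 1) ^ 3 with hCdef
  refine ⟨(ε / 2) ^ (r - 1), by positivity, ⌈(2 * ((C : ℝ) + 1) + 4) / ε⌉₊, ?_⟩
  intro n hn G c hc hdeg x y hxy
  have hr' : (3 : ℝ) ≤ r := by exact_mod_cast hr
  have hnε : 2 * ((C : ℝ) + 1) + 4 ≤ ε * n := by
    have := (Nat.ceil_le.1 hn)
    rw [div_le_iff₀ hε] at this
    linarith
  choose O hO hinj hOc using exists_out G c
  set β : ℝ := (1 / (2 * ((r : ℝ) - 1)) - ε) * n with hβ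
  have hOcard : ∀ v, (n : ℝ) - β ≤ (O v).card := by
    intro v
    rw [hOc v]
    refine le_trans (le_of_eq ?_) (hdeg v)
    rw [hβ]; ring
  have hOn : ∀ v, (O v).card ≤ n := fun v => by
    simpa using Finset.card_le_univ (O v)
  have hβ0 : 0 ≤ β := by
    have h1 := hOcard x
    have h2 : ((O x).card : ℝ) ≤ n := by exact_mod_cast hOn x
    linarith
  have hmO : ∀ v, (Finset.univ \ O v).card ≤ ⌊β⌋₊ := by
    intro v
    apply Nat.le_floor
    rw [Finset.card_sdiff_of_subset (Finset.subset_univ _), Finset.card_univ, Fintype.card_fin,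
      Nat.cast_sub (hOn v)]
    linarith [hOcard v]
  set a := ⌊β⌋₊ + 2 with ha
  set d := ⌊ε * n⌋₊ with hd
  have hdlow : ε * n < d + 1 := Nat.lt_floor_add_one _
  have hdup : (d : ℝ) ≤ ε * n := Nat.floor_le (by positivity)
  have hCd : C < d := by
    have : (C : ℝ) < d := by
      have : (0 : ℝ) ≤ C := Nat.cast_nonneg _
      linarith
    exact_mod_cast this
  set A : Fin n → Finset (Fin n) := fun v => (O v).filter (fun w => c v w ≠ c v x ∧ c v w ≠ c v y)
    with hA
  have hmA : ∀ v, (Finset.univ \ A v).card ≤ a := by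
    intro v
    have hone : ∀ z, ((O v).filter (fun w => c v w = c v z)).card ≤ 1 := by
      intro z
      rw [Finset.card_le_one]
      intro p hp q hq
      rw [Finset.mem_filter] at hp hq
      exact hinj v p hp.1 q hq.1 (hp.2.trans hq.2.symm)
    have hsub : Finset.univ \ A v ⊆ (Finset.univ \ O v) ∪
        ((O v).filter (fun w => c v w = c v x) ∪ (O v).filter (fun w => c v w = c v y)) := by
      intro w
      simp only [hA, Finset.mem_union, Finset.mem_filter, Finset.mem_sdiff, Finset.mem_univ,
        true_and]
      tauto
    have h1 := Finset.card_le_card hsub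
    have h2 := Finset.card_union_le (Finset.univ \ O v)
        ((O v).filter (fun w => c v w = c v x) ∪ (O v).filter (fun w => c v w = c v y))
    have h3 := Finset.card_union_le ((O v).filter (fun w => c v w = c v x))
      ((O v).filter (fun w => c v w = c v y))
    have h4 := hone x
    have h5 := hone y
    have h6 := hmO v
    omega
  have hW0 : n ≤ (O x ∩ O y).card + 2 * a := by
    have hsub : (Finset.univ : Finset (Fin n)) ⊆ (O x ∩ O y) ∪
        ((Finset.univ \ O x) ∪ (Finset.univ \ O y)) := by
      intro w
      simp only [Finset.mem_union, Finset.mem_inter, Finset.mem_sdiff, Finset.mem_univ, true_and]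
      tauto
    have h1 := Finset.card_le_card hsub
    have h2 := Finset.card_union_le (O x ∩ O y) ((Finset.univ \ O x) ∪ (Finset.univ \ O y))
    have h3 := Finset.card_union_le (Finset.univ \ O x) (Finset.univ \ O y)
    have h4 := hmO x
    have h5 := hmO y
    rw [Finset.card_univ, Fintype.card_fin] at h1
    omega
  have hsize : (r - 1) * (2 * a + d) ≤ n := by
    have haR : (a : ℝ) ≤ β + 2 := by
      rw [ha]; push_cast
      linarith [Nat.floor_le hβ0]
    have hR : ((r : ℝ) - 1) * (2 * a + d) ≤ n := by
      have h1 : (2 * a + d : ℝ) ≤ 1 / ((r : ℝ) - 1) * n := by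
        have : 2 * β = 1 / ((r : ℝ) - 1) * n - 2 * (ε * n) := by
          rw [hβ]
          have : (r : ℝ) - 1 ≠ 0 := by linarith
          field_simp
        have : (0 : ℝ) ≤ C := Nat.cast_nonneg _
        linarith
      have h0 : (0 : ℝ) < (r : ℝ) - 1 := by linarith
      calc ((r : ℝ) - 1) * (2 * a + d) ≤ ((r : ℝ) - 1) * (1 / ((r : ℝ) - 1) * n) :=
            mul_le_mul_of_nonneg_left h1 h0.le
        _ = n := by field_simp
    have : (((r - 1) * (2 * a + d) : ℕ) : ℝ) ≤ n := by
      rw [Nat.cast_mul, Nat.cast_sub (by omega)]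
      push_cast
      exact hR
    exact_mod_cast this
  have hsing : ∀ z : Fin n, RainbowClique G c ((∅ : Finset (Fin n)).card + 1) (insert z ∅) := by
    intro z
    refine ⟨by simp, ?_, ?_⟩
    · intro p hp q hq hpq
      simp at hp hq
      exact absurd (hp.trans hq.symm) hpq
    · intro p hp q hq _ _ _ _ hpq
      simp at hp hq
      exact absurd (hp.trans hq.symm) hpq
  have main := greedy G c hc x y r a d C le_rfl hCd O A hO hinj
    (fun v => Finset.filter_subset _ _)
    (fun v w hw => (Finset.mem_filter.1 hw).2.1) (fun v w hw => (Finset.mem_filter.1 hw).2.2)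
    hmA (r - 1) ∅ (O x ∩ O y) (by simp; omega) (hsing x) (hsing y)
    (fun w hw => ⟨(Finset.mem_inter.1 hw).1, (Finset.mem_inter.1 hw).2, by simp⟩)
    (hsize.trans hW0)
  simp only [Finset.empty_union] at main
  rw [← Set.ncard_coe_finset] at main
  simp only [Finset.coe_filter, Finset.mem_univ, true_and] at main
  have hlow : ε / 2 * n ≤ ((d - C : ℕ) : ℝ) := by
    rw [Nat.cast_sub hCd.le]
    linarith
  calc (ε / 2) ^ (r - 1) * (n : ℝ) ^ (r - 1) = (ε / 2 * n) ^ (r - 1) := (mul_pow _ _ _).symm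
    _ ≤ ((d - C : ℕ) : ℝ) ^ (r - 1) := pow_le_pow_left₀ (by positivity) hlow _
    _ = (((d - C) ^ (r - 1) : ℕ) : ℝ) := by push_cast; rfl
    _ ≤ _ := by
      refine le_trans (Nat.cast_le.2 main) (le_of_eq ?_)
      congr! 4
end
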